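/- Arrow's Theorem for linear orders: Let A be a finite set with |A| ≥ 3 and I a finite set. Let σ : L(A)^I → L(A) be a function from profiles of linear orders on A to linear orders on A satisfying IIA (if two profiles agree on the relative ranking of a and b for every individual, then the outputs agree on the relative ranking of a and b) and Pareto (if every individual ranks a above b, then σ ranks a above b). Then σ is a dictatorship: there exists i ∈ I such that σ(p) = pᵢ for all profiles p. -/

import Mathlib

/-- A linear preference relation: transitive, connected, and antisymmetric. -/
def IsLinPref {A : Type*} (R : A → A → Prop) : Prop :=
  (∀ a b c, R a b → R b c → R a c) ∧ (∀ a b, R a b ∨ R b a) ∧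
  (∀ a b, R a b → R b a → a = b)

/-- The strict part of a preference relation. -/
def strictly {A : Type*} (R : A → A → Prop) (a b : A) : Prop := R a b ∧ ¬ R b a

abbrev LP (A : Type*) := {R : A → A → Prop // IsLinPref R}

lemma LP.not_iff {A : Type*} (R : LP A) {a b : A} (h : a ≠ b) : R.1 b a ↔ ¬ R.1 a b := by
  obtain ⟨R, h1, h2, h3⟩ := R
  exact ⟨fun x y => h (h3 _ _ y x), fun x => (h2 a b).resolve_left x⟩

lemma LP.trans {A : Type*} (R : LP A) {a b c : A} (h : R.1 a b) (h' : R.1 b c) : R.1 a c :=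
  R.2.1 _ _ _ h h'

/-- Every ranking function is refined by a linear preference (small rank is best). -/
lemma exists_LP {A : Type*} (f : A → ℕ) : ∃ R : LP A, ∀ a b, f a < f b → R.1 a b ∧ ¬ R.1 b a := by
  classical
  let _ : LinearOrder A := linearOrderOfSTO WellOrderingRel
  refine ⟨⟨fun a b => f a < f b ∨ (f a = f b ∧ a ≤ b), ?_, ?_, ?_⟩, ?_⟩
  · rintro a b c (h | ⟨h, h'⟩) (k | ⟨k, k'⟩)
    · left; omega
    · left; omega
    · left; omega
    · right; exact ⟨h.trans k, h'.trans k'⟩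
  · intro a b
    rcases lt_trichotomy (f a) (f b) with h | h | h
    · exact Or.inl (Or.inl h)
    · rcases le_total a b with k | k
      · exact Or.inl (Or.inr ⟨h, k⟩)
      · exact Or.inr (Or.inr ⟨h.symm, k⟩)
    · exact Or.inr (Or.inl h)
  · rintro a b (h | ⟨h, h'⟩) (k | ⟨k, k'⟩)
    · omega
    · omega
    · omega
    · exact le_antisymm h' k'
  · intro a b h
    refine ⟨Or.inl h, ?_⟩
    rintro (k | ⟨k, _⟩) <;> omega

/-- A profile with prescribed ranks on three alternatives. -/
lemma exists_profile {A I : Type*} {a b c : A} (hab : a ≠ b) (hac : a ≠ c) (hbc : b ≠ c)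
    (u v w : I → ℕ) : ∃ p : I → LP A, ∀ i,
      (u i < v i → (p i).1 a b ∧ ¬ (p i).1 b a) ∧ (v i < u i → (p i).1 b a ∧ ¬ (p i).1 a b) ∧
      (u i < w i → (p i).1 a c ∧ ¬ (p i).1 c a) ∧ (w i < u i → (p i).1 c a ∧ ¬ (p i).1 a c) ∧
      (v i < w i → (p i).1 b c ∧ ¬ (p i).1 c b) ∧ (w i < v i → (p i).1 c b ∧ ¬ (p i).1 b c) := by
  classical
  choose p hp using fun i => exists_LP (fun x : A => if x = a then u i else if x = b then v i else w i)
  refine ⟨p, fun i => ?_⟩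
  have h1 := hp i a b
  have h2 := hp i b a
  have h3 := hp i a c
  have h4 := hp i c a
  have h5 := hp i b c
  have h6 := hp i c b
  simp only [if_true, hab.symm, hac.symm, hbc.symm, if_false] at h1 h2 h3 h4 h5 h6
  exact ⟨h1, h2, h3, h4, h5, h6⟩

/-- `S` is decisive for `a` over `b`. -/
def Dec {A I : Type*} (σ : (I → LP A) → LP A) (a b : A) (S : Set I) : Prop :=
  ∀ p : I → LP A, (∀ i, i ∈ S ↔ (p i).1 a b) → (σ p).1 a b

theorem stmt_19 {A I : Type*} [Finite A] [Finite I]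
    (h3 : ∃ x y z : A, x ≠ y ∧ x ≠ z ∧ y ≠ z)
    (σ : (I → {R : A → A → Prop // IsLinPref R}) → {R : A → A → Prop // IsLinPref R})
    (hIIA : ∀ a b : A, ∀ p q : I → {R : A → A → Prop // IsLinPref R},
      (∀ i, ((p i).1 a b ↔ (q i).1 a b) ∧ ((p i).1 b a ↔ (q i).1 b a)) →
      (((σ p).1 a b ↔ (σ q).1 a b) ∧ ((σ p).1 b a ↔ (σ q).1 b a)))
    (hP : ∀ a b : A, ∀ p : I → {R : A → A → Prop // IsLinPref R},
      (∀ i, strictly (p i).1 a b) → strictly (σ p).1 a b) :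
    ∃ i : I, ∀ p : I → {R : A → A → Prop // IsLinPref R}, σ p = p i := by
  classical
  have mk : ∀ {a b : A} {S : Set I}, a ≠ b → ∀ p : I → LP A, (∀ i, i ∈ S ↔ (p i).1 a b) →
      (σ p).1 a b → Dec σ a b S := by
    intro a b S hab p hp h q hq
    refine ((hIIA a b p q fun i => ?_).1).1 h
    rw [LP.not_iff (p i) hab, LP.not_iff (q i) hab, ← hp, ← hq]
    simp
  have par : ∀ {a b : A} (p : I → LP A), (∀ i, (p i).1 a b ∧ ¬ (p i).1 b a) → (σ p).1 a b :=
    fun p h => (hP _ _ p h).1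
  have right : ∀ {a b c : A} {S : Set I}, a ≠ b → a ≠ c → b ≠ c → Dec σ a b S → Dec σ a c S := by
    intro a b c S hab hac hbc h
    obtain ⟨p, hp⟩ := exists_profile (I := I) hab hac hbc
      (fun i => if i ∈ S then 0 else 2) (fun i => if i ∈ S then 1 else 0)
      (fun i => if i ∈ S then 2 else 1)
    refine mk hac p (fun i => ?_) (LP.trans _ (h p fun i => ?_) (par (a := b) p fun i => ?_))
    all_goals
      have := hp i
      by_cases hi : i ∈ S <;> simp [hi] at this ⊢ <;> tauto
  have left : ∀ {a b c : A} {S : Set I}, a ≠ b → a ≠ c → b ≠ c → Dec σ a b S → Dec σ c b S := by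
    intro a b c S hab hac hbc h
    obtain ⟨p, hp⟩ := exists_profile (I := I) hab hac hbc
      (fun i => if i ∈ S then 1 else 2) (fun i => if i ∈ S then 2 else 0)
      (fun i => if i ∈ S then 0 else 1)
    refine mk hbc.symm p (fun i => ?_) (LP.trans _ (par (b := a) p fun i => ?_) (h p fun i => ?_))
    all_goals
      have := hp i
      by_cases hi : i ∈ S <;> simp [hi] at this ⊢ <;> tauto
  have third : ∀ a b : A, ∃ c, a ≠ c ∧ b ≠ c := by
    obtain ⟨x, y, z, hxy, hxz, hyz⟩ := h3
    intro a b
    by_contra! hc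
    have hx := hc x
    have hy := hc y
    have hz := hc z
    by_cases h1 : a = x <;> by_cases h2 : a = y <;> by_cases h3 : a = z <;> grind
  have all : ∀ {a b : A} {S : Set I}, a ≠ b → Dec σ a b S → ∀ x y, x ≠ y → Dec σ x y S := by
    intro a b S hab h x y hxy
    by_cases hya : y = a
    · subst hya
      by_cases hxb : x = b
      · subst hxb
        obtain ⟨c, hc, hc'⟩ := third x y
        exact right hc hxy hc'.symm (left hc' hab hc.symm (right hab hc' hc h))
      · exact right hxb hxy hab.symm (left hab hxy.symm (Ne.symm hxb) h)
    · have h1 : Dec σ a y S := by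
        by_cases hyb : y = b
        · exact hyb ▸ h
        · exact right hab (Ne.symm hya) (Ne.symm hyb) h
      by_cases hxa : x = a
      · exact hxa ▸ h1
      · exact left (Ne.symm hya) (Ne.symm hxa) hxy.symm h1
  obtain ⟨a, b, c, hab, hac, hbc⟩ := h3
  have compl : ∀ S : Set I, ¬ Dec σ a b S → Dec σ a b Sᶜ := by
    intro S h
    obtain ⟨p, hp⟩ := exists_profile (I := I) hab hac hbc
      (fun i => if i ∈ S then 0 else 1) (fun i => if i ∈ S then 1 else 0) (fun i => 2)
    have key : ∀ i, i ∈ S ↔ (p i).1 a b := by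
      intro i
      have := hp i
      by_cases hi : i ∈ S <;> simp [hi] at this ⊢ <;> tauto
    have h' : ¬ (σ p).1 a b := fun k => h (mk hab p key k)
    refine all hab.symm (mk hab.symm p (fun i => ?_) ((LP.not_iff _ hab).2 h')) a b hab
    rw [LP.not_iff (p i) hab, ← key i]
    rfl
  have inter : ∀ S T : Set I, Dec σ a b S → Dec σ a b T → Dec σ a b (S ∩ T) := by
    intro S T hS hT
    obtain ⟨p, hp⟩ := exists_profile (I := I) hab hac hbc
      (fun i => if i ∈ S then (if i ∈ T then 0 else 1) else 2)
      (fun i => if i ∈ S then (if i ∈ T then 1 else 2) else if i ∈ T then 0 else 1)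
      (fun i => if i ∈ S then (if i ∈ T then 2 else 0) else if i ∈ T then 1 else 0)
    refine all hac (mk hac p (fun i => ?_) (LP.trans _ (hS p fun i => ?_)
      (all hab hT b c hbc p fun i => ?_))) a b hab
    all_goals
      have := hp i
      by_cases hi : i ∈ S <;> by_cases hj : i ∈ T <;> simp [hi, hj] at this ⊢ <;> tauto
  have uni : Dec σ a b Set.univ := by
    intro p hp
    refine par p fun i => ?_
    have h1 := (hp i).1 trivial
    exact ⟨h1, fun k => (LP.not_iff (p i) hab).1 k h1⟩
  have emp : ¬ Dec σ a b ∅ := by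
    intro h
    obtain ⟨p, hp⟩ := exists_profile (I := I) hab hac hbc (fun i => 1) (fun i => 0) (fun i => 2)
    have h1 := h p fun i => by
      have := (hp i).2.1 (by norm_num)
      simpa using this.2
    exact (hP b a p fun i => (hp i).2.1 (by norm_num)).2 h1
  obtain ⟨i, hi⟩ : ∃ i, Dec σ a b {i} := by
    by_contra! hno
    have fin : ∀ F : Set I, F.Finite → Dec σ a b Fᶜ := by
      intro F hF
      induction F, hF using Set.Finite.induction_on with
      | empty => simpa using uni
      | @insert j F _ _ ih =>
        have := inter _ _ (compl _ (hno j)) ih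
        rwa [← Set.compl_union, Set.singleton_union] at this
    have := fin Set.univ Set.finite_univ
    rw [Set.compl_univ] at this
    exact emp this
  refine ⟨i, fun p => ?_⟩
  have dict : ∀ x y, x ≠ y → (p i).1 x y → (σ p).1 x y := by
    intro x y hxy h
    have hS : Dec σ a b {j | (p j).1 x y} := by
      by_contra hS
      have := inter _ _ (compl _ hS) hi
      have e : {j | (p j).1 x y}ᶜ ∩ {i} = (∅ : Set I) := by
        ext j
        simp only [Set.mem_inter_iff, Set.mem_compl_iff, Set.mem_setOf_eq,
          Set.mem_singleton_iff, Set.mem_empty_iff_false, iff_false]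
        rintro ⟨k, rfl⟩
        exact k h
      rw [e] at this
      exact emp this
    exact all hab hS x y hxy p fun j => Iff.rfl
  apply Subtype.ext
  funext x y
  apply propext
  by_cases hxy : x = y
  · subst hxy
    exact iff_of_true ((σ p).2.2.1 x x |>.elim id id) ((p i).2.2.1 x x |>.elim id id)
  · refine ⟨fun h => ?_, dict x y hxy⟩
    by_contra hc
    exact (LP.not_iff (σ p) hxy).1 (dict y x (Ne.symm hxy) ((LP.not_iff (p i) hxy).2 hc)) h
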